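/- Let H : ℝ × (ℝ^d × ℝ^d) → ℝ be a smooth Hamiltonian that is 1-periodic in time, H(t+1,z) = H(t,z), with a smooth flow φ satisfying the cocycle identity φ(t+1,z) = φ(t, φ(1,z)) for all t,z, and let ψ = φ(1,·) be its time-1 map. Let x₀ and y₀ be fixed points of ψ, let x(t) = φ(t,x₀) and y(t) = φ(t,y₀), t ∈ [0,1], be the corresponding 1-periodic orbits, set c = 𝒜_H(y) − 𝒜_H(x), and let σ : [0,1] → ℝ^d × ℝ^d be a C¹ curve with σ(0) = x₀ and σ(1) = y₀. Then for every n ≥ 1, I(ψⁿ∘σ) − I(σ) = n·c, where ψⁿ denotes the n-th iterate of ψ. -/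

import Mathlib

open intervalIntegral

/-- The Liouville line integral `I(c) = ∫₀¹ ⟨p(t), q'(t)⟩ dt` of a curve
`c(t) = (q(t), p(t))` in `ℝ^d × ℝ^d`. -/
noncomputable def liouvilleIntegral (d : ℕ)
    (c : ℝ → EuclideanSpace ℝ (Fin d) × EuclideanSpace ℝ (Fin d)) : ℝ :=
  ∫ t in (0:ℝ)..1, @inner ℝ _ _ ((c t).2) (deriv (fun s => (c s).1) t)

/-- The Hamiltonian vector field `X_H(t,(q,p)) = (∂_p H(t,q,p), −∂_q H(t,q,p))`. -/
noncomputable def hamVectorField (d : ℕ)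
    (H : ℝ × (EuclideanSpace ℝ (Fin d) × EuclideanSpace ℝ (Fin d)) → ℝ) (t : ℝ)
    (z : EuclideanSpace ℝ (Fin d) × EuclideanSpace ℝ (Fin d)) :
    EuclideanSpace ℝ (Fin d) × EuclideanSpace ℝ (Fin d) :=
  (gradient (fun p => H (t, (z.1, p))) z.2, - gradient (fun q => H (t, (q, z.2))) z.1)

/-- The symplectic action `𝒜_H(γ) = I(γ) − ∫₀¹ H(t,γ(t)) dt` of a curve `γ`. -/
noncomputable def symplecticAction (d : ℕ)
    (H : ℝ × (EuclideanSpace ℝ (Fin d) × EuclideanSpace ℝ (Fin d)) → ℝ)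
    (γ : ℝ → EuclideanSpace ℝ (Fin d) × EuclideanSpace ℝ (Fin d)) : ℝ :=
  liouvilleIntegral d γ - ∫ t in (0:ℝ)..1, H (t, γ t)

/-!
For a family `u t s = φ (t, σ s)` whose time curves are Hamiltonian trajectories, Cartan's formula
reads `∂ₜ ⟨p, ∂ₛq⟩ = ∂ₛ (⟨p, ∂ₜq⟩ - H)`. Integrating over the unit square, the left-hand side gives
`I(ψ ∘ σ) - I(σ)` and the right-hand side the difference of the actions of the two trajectories
through the endpoints of `σ`. Applying this to the curves `ψᵏ ∘ σ` and summing over `k < n` gives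
`I(ψⁿ ∘ σ) - I(σ)`, and all summands agree when `ψ` fixes the endpoints.
-/

open MeasureTheory Set

section Rectangle

variable {F : Type*} [NormedAddCommGroup F] [NormedSpace ℝ F]

theorem intervalIntegral_swap_of_continuous {f : ℝ → ℝ → F} (hf : Continuous f.uncurry)
    (a b c d : ℝ) :
    ∫ x in a..b, ∫ y in c..d, f x y = ∫ y in c..d, ∫ x in a..b, f x y := by
  have hcompact : IntegrableOn f.uncurry (uIcc a b ×ˢ uIcc c d) :=
    hf.continuousOn.integrableOn_compact (isCompact_uIcc.prod isCompact_uIcc)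
  exact intervalIntegral_intervalIntegral_swap
    (hcompact.mono_set (prod_mono uIoc_subset_uIcc uIoc_subset_uIcc))

theorem integral_increment_eq_of_hasDerivAt [CompleteSpace F] {P Q h : ℝ → ℝ → F}
    (hP : ∀ t s, HasDerivAt (fun r => P r s) (h t s) t)
    (hQ : ∀ t s, HasDerivAt (Q t) (h t s) s)
    (hh : Continuous h.uncurry) (a b c d : ℝ) :
    ∫ s in c..d, (P b s - P a s) = ∫ t in a..b, (Q t d - Q t c) := by
  have hPs (s : ℝ) : ∫ t in a..b, h t s = P b s - P a s :=
    integral_eq_sub_of_hasDerivAt (fun t _ => hP t s)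
      ((hh.uncurry_right s).intervalIntegrable a b)
  have hQt (t : ℝ) : ∫ s in c..d, h t s = Q t d - Q t c :=
    integral_eq_sub_of_hasDerivAt (fun s _ => hQ t s)
      ((hh.uncurry_left t).intervalIntegrable c d)
  simp only [← hPs, ← hQt]
  exact (intervalIntegral_swap_of_continuous hh a b c d).symm

end Rectangle

section PartialDerivatives

variable {Z W : Type*} [NormedAddCommGroup Z] [NormedSpace ℝ Z]
  [NormedAddCommGroup W] [NormedSpace ℝ W]

theorem hasDerivAt_comp_fst {γ : ℝ → Z × W} {γ' : Z × W} {t : ℝ} (hγ : HasDerivAt γ γ' t) :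
    HasDerivAt (fun r => (γ r).1) γ'.1 t :=
  (hasFDerivAt_fst (𝕜 := ℝ) (p := γ t)).comp_hasDerivAt t hγ

theorem hasDerivAt_comp_snd {γ : ℝ → Z × W} {γ' : Z × W} {t : ℝ} (hγ : HasDerivAt γ γ' t) :
    HasDerivAt (fun r => (γ r).2) γ'.2 t :=
  (hasFDerivAt_snd (𝕜 := ℝ) (p := γ t)).comp_hasDerivAt t hγ

theorem hasDerivAt_apply_prodMk_const {f : ℝ × Z → W} {t : ℝ} {z : Z}
    (hf : DifferentiableAt ℝ f (t, z)) :
    HasDerivAt (fun r => f (r, z)) (fderiv ℝ f (t, z) (1, 0)) t :=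
  hf.hasFDerivAt.comp_hasDerivAt t ((hasDerivAt_id t).prodMk (hasDerivAt_const t z))

theorem hasDerivAt_apply_const_prodMk {f : ℝ × Z → W} {γ : ℝ → Z} {γ' : Z} {t s : ℝ}
    (hf : DifferentiableAt ℝ f (t, γ s)) (hγ : HasDerivAt γ γ' s) :
    HasDerivAt (fun r => f (t, γ r)) (fderiv ℝ f (t, γ s) (0, γ')) s :=
  hf.hasFDerivAt.comp_hasDerivAt s ((hasDerivAt_const s t).prodMk hγ)

theorem hasDerivAt_fderiv_apply_prodMk_const {f : ℝ × Z → W} {t : ℝ} {z : Z}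
    (hf : DifferentiableAt ℝ (fderiv ℝ f) (t, z)) (v : Z) :
    HasDerivAt (fun r => fderiv ℝ f (r, z) (0, v))
      (fderiv ℝ (fderiv ℝ f) (t, z) (1, 0) (0, v)) t := by
  simpa only [map_zero, add_zero] using
    (hasDerivAt_apply_prodMk_const hf).clm_apply (hasDerivAt_const t ((0 : ℝ), v))

theorem hasDerivAt_fderiv_apply_const_prodMk {f : ℝ × Z → W} {γ : ℝ → Z} {γ' : Z} {t s : ℝ}
    (hf : DifferentiableAt ℝ (fderiv ℝ f) (t, γ s)) (hsymm : IsSymmSndFDerivAt ℝ f (t, γ s))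
    (hγ : HasDerivAt γ γ' s) :
    HasDerivAt (fun r => fderiv ℝ f (t, γ r) (1, 0))
      (fderiv ℝ (fderiv ℝ f) (t, γ s) (1, 0) (0, γ')) s := by
  rw [hsymm.eq]
  simpa only [map_zero, add_zero] using
    (hasDerivAt_apply_const_prodMk hf hγ).clm_apply (hasDerivAt_const s ((1 : ℝ), (0 : Z)))

end PartialDerivatives

section HilbertPhaseSpace

variable {E : Type*} [NormedAddCommGroup E] [InnerProductSpace ℝ E]

/-- The Liouville line integral `∫₀¹ ⟨p(t), q'(t)⟩ dt` in the phase space `E × E` of a real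
Hilbert space; it is definitionally `liouvilleIntegral d` for `E = ℝ^d`. -/
noncomputable def liouvilleLineIntegral (γ : ℝ → E × E) : ℝ :=
  ∫ t in (0 : ℝ)..1, inner ℝ (γ t).2 (deriv (fun s => (γ s).1) t)

/-- The symplectic action `∫₀¹ (⟨p, q'⟩ - H(t, q, p)) dt` in `E × E`; it is definitionally
`symplecticAction d` for `E = ℝ^d`. -/
noncomputable def hamiltonianAction (H : ℝ × (E × E) → ℝ) (γ : ℝ → E × E) : ℝ :=
  liouvilleLineIntegral γ - ∫ t in (0 : ℝ)..1, H (t, γ t)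

theorem liouvilleLineIntegral_eq_of_hasDerivAt {γ γ' : ℝ → E × E}
    (hγ : ∀ t, HasDerivAt γ (γ' t) t) :
    liouvilleLineIntegral γ = ∫ t in (0 : ℝ)..1, inner ℝ (γ t).2 (γ' t).1 := by
  simp only [liouvilleLineIntegral, fun t => (hasDerivAt_comp_fst (hγ t)).deriv]

theorem hamiltonianAction_eq_of_hasDerivAt {H : ℝ × (E × E) → ℝ} (hH : Continuous H)
    {γ γ' : ℝ → E × E} (hγ : ∀ t, HasDerivAt γ (γ' t) t) (hγ' : Continuous γ') :
    hamiltonianAction H γ = ∫ t in (0 : ℝ)..1, (inner ℝ (γ t).2 (γ' t).1 - H (t, γ t)) := by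
  have hγc : Continuous γ := continuous_iff_continuousAt.2 fun t => (hγ t).continuousAt
  rw [hamiltonianAction, liouvilleLineIntegral_eq_of_hasDerivAt hγ, intervalIntegral.integral_sub]
  all_goals exact Continuous.intervalIntegrable (by fun_prop) 0 1

variable [CompleteSpace E]

/-- The Hamiltonian vector field `(∂_p H, -∂_q H)` on `E × E`; it is definitionally
`hamVectorField d` for `E = ℝ^d`. -/
noncomputable def hamiltonianVectorField (H : ℝ × (E × E) → ℝ) (t : ℝ) (z : E × E) : E × E :=
  (gradient (fun p => H (t, (z.1, p))) z.2, -gradient (fun q => H (t, (q, z.2))) z.1)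

theorem fderiv_apply_eq_inner_hamiltonianVectorField {H : ℝ × (E × E) → ℝ} {t : ℝ} {z : E × E}
    (hH : DifferentiableAt ℝ H (t, z)) (v : E × E) :
    fderiv ℝ H (t, z) (0, v) =
      inner ℝ (hamiltonianVectorField H t z).1 v.2 -
        inner ℝ (hamiltonianVectorField H t z).2 v.1 := by
  have hp : fderiv ℝ (fun p => H (t, (z.1, p))) z.2 v.2 = fderiv ℝ H (t, z) (0, (0, v.2)) := by
    have hslice : HasFDerivAt (fun p => (t, (z.1, p))) (.inr ℝ ℝ (E × E) ∘L .inr ℝ E E) z.2 :=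
      (hasFDerivAt_prodMk_right t z).comp z.2 (hasFDerivAt_prodMk_right z.1 z.2)
    exact DFunLike.congr_fun (hH.hasFDerivAt.comp z.2 hslice).fderiv v.2
  have hq : fderiv ℝ (fun q => H (t, (q, z.2))) z.1 v.1 = fderiv ℝ H (t, z) (0, (v.1, 0)) := by
    have hslice : HasFDerivAt (fun q => (t, (q, z.2))) (.inr ℝ ℝ (E × E) ∘L .inl ℝ E E) z.1 :=
      (hasFDerivAt_prodMk_right t z).comp z.1 (hasFDerivAt_prodMk_left z.1 z.2)
    exact DFunLike.congr_fun (hH.hasFDerivAt.comp z.1 hslice).fderiv v.1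
  simp only [hamiltonianVectorField, inner_neg_left, inner_gradient_left, hp, hq, sub_neg_eq_add,
    ← map_add, Prod.mk_add_mk, add_zero, zero_add, Prod.mk.eta]

theorem hasDerivAt_inner_sub_hamiltonian {H : ℝ × (E × E) → ℝ} {t s : ℝ} {u uₜ : ℝ → E × E}
    {uₛ uₜₛ : E × E} (hH : DifferentiableAt ℝ H (t, u s))
    (hX : uₜ s = hamiltonianVectorField H t (u s))
    (hu : HasDerivAt u uₛ s) (huₜ : HasDerivAt uₜ uₜₛ s) :
    HasDerivAt (fun r => inner ℝ (u r).2 (uₜ r).1 - H (t, u r))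
      (inner ℝ (u s).2 uₜₛ.1 + inner ℝ (uₜ s).2 uₛ.1) s := by
  refine (((hasDerivAt_comp_snd hu).inner ℝ (hasDerivAt_comp_fst huₜ)).sub
    (hasDerivAt_apply_const_prodMk hH hu)).congr_deriv ?_
  rw [fderiv_apply_eq_inner_hamiltonianVectorField hH, ← hX, real_inner_comm (uₜ s).1]
  ring

theorem liouvilleLineIntegral_sub_eq_hamiltonianAction_sub {H : ℝ × (E × E) → ℝ}
    (hH : Differentiable ℝ H) {u uₜ uₛ uₜₛ : ℝ → ℝ → E × E}
    (hX : ∀ t s, uₜ t s = hamiltonianVectorField H t (u t s))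
    (ht : ∀ t s, HasDerivAt (fun r => u r s) (uₜ t s) t)
    (hs : ∀ t s, HasDerivAt (u t) (uₛ t s) s)
    (hst : ∀ t s, HasDerivAt (fun r => uₛ r s) (uₜₛ t s) t)
    (hts : ∀ t s, HasDerivAt (uₜ t) (uₜₛ t s) s)
    (hu : Continuous u.uncurry) (huₜ : Continuous uₜ.uncurry) (huₛ : Continuous uₛ.uncurry)
    (huₜₛ : Continuous uₜₛ.uncurry) :
    liouvilleLineIntegral (u 1) - liouvilleLineIntegral (u 0) =
      hamiltonianAction H (fun t => u t 1) - hamiltonianAction H (fun t => u t 0) := by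
  have hHc : Continuous H := hH.continuous
  rw [liouvilleLineIntegral_eq_of_hasDerivAt (hs 1),
    liouvilleLineIntegral_eq_of_hasDerivAt (hs 0),
    hamiltonianAction_eq_of_hasDerivAt hHc (ht · 1) (huₜ.uncurry_right 1),
    hamiltonianAction_eq_of_hasDerivAt hHc (ht · 0) (huₜ.uncurry_right 0),
    ← intervalIntegral.integral_sub, ← intervalIntegral.integral_sub]
  · refine integral_increment_eq_of_hasDerivAt
      (P := fun t s => inner ℝ (u t s).2 (uₛ t s).1)
      (Q := fun t s => inner ℝ (u t s).2 (uₜ t s).1 - H (t, u t s))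
      (fun t s => (hasDerivAt_comp_snd (ht t s)).inner ℝ (hasDerivAt_comp_fst (hst t s)))
      (fun t s => hasDerivAt_inner_sub_hamiltonian (hH _) (hX t s) (hs t s) (hts t s)) ?_ 0 1 0 1
    fun_prop
  all_goals exact Continuous.intervalIntegrable (by fun_prop) 0 1

/-- `φ` is the flow of the time-dependent Hamiltonian `H` on `E × E` starting at time `0`, in the
uncurried form `φ (t, z)`. -/
structure IsHamiltonianFlow (H : ℝ × (E × E) → ℝ) (φ : ℝ × (E × E) → E × E) : Prop where
  map_zero : ∀ z, φ (0, z) = z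
  hasDerivAt : ∀ t z, HasDerivAt (fun r => φ (r, z)) (hamiltonianVectorField H t (φ (t, z))) t

namespace IsHamiltonianFlow

variable {H : ℝ × (E × E) → ℝ} {φ : ℝ × (E × E) → E × E} {σ : ℝ → E × E}

theorem of_deriv_eq (hφ : Differentiable ℝ φ) (hφ0 : ∀ z, φ (0, z) = z)
    (hφ' : ∀ t z, deriv (fun r => φ (r, z)) t = hamiltonianVectorField H t (φ (t, z))) :
    IsHamiltonianFlow H φ where
  map_zero := hφ0
  hasDerivAt t z := by
    rw [← hφ' t z]
    exact (hasDerivAt_apply_prodMk_const (hφ (t, z))).differentiableAt.hasDerivAt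

theorem liouvilleLineIntegral_comp_sub (hflow : IsHamiltonianFlow H φ)
    (hH : Differentiable ℝ H) (hφ : ContDiff ℝ 2 φ) (hσ : ContDiff ℝ 1 σ) :
    liouvilleLineIntegral ((fun z => φ (1, z)) ∘ σ) - liouvilleLineIntegral σ =
      hamiltonianAction H (fun t => φ (t, σ 1)) - hamiltonianAction H (fun t => φ (t, σ 0)) := by
  have hφd : Differentiable ℝ φ := hφ.differentiable two_ne_zero
  have hφ' : ContDiff ℝ 1 (fderiv ℝ φ) := hφ.fderiv_right one_add_one_eq_two.le
  have hφ'c : Continuous (fderiv ℝ φ) := hφ'.continuous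
  have hφ'd : Differentiable ℝ (fderiv ℝ φ) := hφ'.differentiable one_ne_zero
  have hφ''c : Continuous (fderiv ℝ (fderiv ℝ φ)) := hφ'.continuous_fderiv one_ne_zero
  have hsymm (x : ℝ × (E × E)) : IsSymmSndFDerivAt ℝ φ x :=
    hφ.contDiffAt.isSymmSndFDerivAt minSmoothness_of_isRCLikeNormedField.le
  have hσd (s : ℝ) : HasDerivAt σ (deriv σ s) s := (hσ.differentiable one_ne_zero s).hasDerivAt
  have ht (t : ℝ) (z : E × E) := hasDerivAt_apply_prodMk_const (hφd (t, z))
  have key := liouvilleLineIntegral_sub_eq_hamiltonianAction_sub hH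
    (u := fun t s => φ (t, σ s))
    (uₜ := fun t s => fderiv ℝ φ (t, σ s) (1, 0))
    (uₛ := fun t s => fderiv ℝ φ (t, σ s) (0, deriv σ s))
    (uₜₛ := fun t s => fderiv ℝ (fderiv ℝ φ) (t, σ s) (1, 0) (0, deriv σ s))
    (fun t s => (ht t (σ s)).unique (hflow.hasDerivAt t (σ s)))
    (fun t s => ht t (σ s))
    (fun t s => hasDerivAt_apply_const_prodMk (hφd _) (hσd s))
    (fun t s => hasDerivAt_fderiv_apply_prodMk_const (hφ'd _) (deriv σ s))
    (fun t s => hasDerivAt_fderiv_apply_const_prodMk (hφ'd _) (hsymm _) (hσd s))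
    (by fun_prop) (by fun_prop) (by fun_prop) (by fun_prop)
  simp only [hflow.map_zero] at key
  exact key

theorem liouvilleLineIntegral_iterate_comp_sub (hflow : IsHamiltonianFlow H φ)
    (hH : Differentiable ℝ H) (hφ : ContDiff ℝ 2 φ) (hσ : ContDiff ℝ 1 σ) (n : ℕ) :
    liouvilleLineIntegral ((fun z => φ (1, z))^[n] ∘ σ) - liouvilleLineIntegral σ =
      ∑ k ∈ Finset.range n,
        (hamiltonianAction H (fun t => φ (t, (fun z => φ (1, z))^[k] (σ 1))) -
          hamiltonianAction H (fun t => φ (t, (fun z => φ (1, z))^[k] (σ 0)))) := by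
  set ψ : E × E → E × E := fun z => φ (1, z)
  have hψ : ContDiff ℝ 1 ψ := (hφ.comp (contDiff_prodMk_right 1)).of_le one_le_two
  have hψσ (k : ℕ) : ContDiff ℝ 1 (ψ^[k] ∘ σ) := by
    induction k with
    | zero => exact hσ
    | succ k ih => simpa only [Function.iterate_succ', Function.comp_assoc] using hψ.comp ih
  have hstep (k : ℕ) :
      liouvilleLineIntegral (ψ^[k + 1] ∘ σ) - liouvilleLineIntegral (ψ^[k] ∘ σ) =
        hamiltonianAction H (fun t => φ (t, ψ^[k] (σ 1))) -
          hamiltonianAction H (fun t => φ (t, ψ^[k] (σ 0))) := by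
    rw [Function.iterate_succ']
    exact hflow.liouvilleLineIntegral_comp_sub hH hφ (hψσ k)
  simp only [← hstep]
  exact (Finset.sum_range_sub (fun k => liouvilleLineIntegral (ψ^[k] ∘ σ)) n).symm

end IsHamiltonianFlow

theorem stmt_3_general {H : ℝ × (E × E) → ℝ} {φ : ℝ × (E × E) → E × E}
    (hflow : IsHamiltonianFlow H φ) (hH : Differentiable ℝ H) (hφ : ContDiff ℝ 2 φ)
    {x₀ y₀ : E × E} (hx₀ : φ (1, x₀) = x₀) (hy₀ : φ (1, y₀) = y₀)
    {σ : ℝ → E × E} (hσ : ContDiff ℝ 1 σ) (hσ0 : σ 0 = x₀) (hσ1 : σ 1 = y₀) (n : ℕ) :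
    liouvilleLineIntegral ((fun z => φ (1, z))^[n] ∘ σ) - liouvilleLineIntegral σ =
      n * (hamiltonianAction H (fun t => φ (t, y₀)) -
        hamiltonianAction H (fun t => φ (t, x₀))) := by
  have hx (k : ℕ) : (fun z => φ (1, z))^[k] x₀ = x₀ := Function.iterate_fixed hx₀ k
  have hy (k : ℕ) : (fun z => φ (1, z))^[k] y₀ = y₀ := Function.iterate_fixed hy₀ k
  rw [hflow.liouvilleLineIntegral_iterate_comp_sub hH hφ hσ n]
  simp only [hσ0, hσ1, hx, hy, Finset.sum_const, Finset.card_range, nsmul_eq_mul]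

end HilbertPhaseSpace

/-- If `x₀`, `y₀` are fixed points of the time-1 map `ψ` of the flow of a 1-periodic
Hamiltonian `H`, with action difference `c` between the corresponding 1-periodic orbits,
then for every `n ≥ 1`, `I(ψⁿ∘σ) − I(σ) = n·c` for any C¹ curve `σ` from `x₀` to `y₀`. -/
theorem stmt_3 (d : ℕ)
    (H : ℝ × (EuclideanSpace ℝ (Fin d) × EuclideanSpace ℝ (Fin d)) → ℝ)
    (φ : ℝ × (EuclideanSpace ℝ (Fin d) × EuclideanSpace ℝ (Fin d)) →
      EuclideanSpace ℝ (Fin d) × EuclideanSpace ℝ (Fin d))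
    (hH : ContDiff ℝ (⊤ : ℕ∞) H) (hφ : ContDiff ℝ (⊤ : ℕ∞) φ)
    (hHper : ∀ t z, H (t + 1, z) = H (t, z))
    (hφ0 : ∀ z, φ (0, z) = z)
    (hφflow : ∀ t z, deriv (fun s => φ (s, z)) t = hamVectorField d H t (φ (t, z)))
    (hcocycle : ∀ t z, φ (t + 1, z) = φ (t, φ (1, z)))
    (x₀ y₀ : EuclideanSpace ℝ (Fin d) × EuclideanSpace ℝ (Fin d))
    (hx₀ : φ (1, x₀) = x₀) (hy₀ : φ (1, y₀) = y₀)
    (c : ℝ)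
    (hc : c = symplecticAction d H (fun t => φ (t, y₀)) -
      symplecticAction d H (fun t => φ (t, x₀)))
    (σ : ℝ → EuclideanSpace ℝ (Fin d) × EuclideanSpace ℝ (Fin d)) (hσ : ContDiff ℝ 1 σ)
    (hσ0 : σ 0 = x₀) (hσ1 : σ 1 = y₀) :
    ∀ n : ℕ, 1 ≤ n →
      liouvilleIntegral d ((fun z => φ (1, z))^[n] ∘ σ) - liouvilleIntegral d σ = n * c := by
  have hflow : IsHamiltonianFlow H φ := .of_deriv_eq (hφ.differentiable (by simp)) hφ0 hφflow
  exact fun n _ => hc ▸ stmt_3_general hflow (hH.differentiable (by simp))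
    (hφ.of_le (by norm_cast)) hx₀ hy₀ hσ hσ0 hσ1 n
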